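/- Let I ⊆ R and I' ⊆ R' be monomial ideals in polynomial rings over the same field K. If there is a lattice isomorphism from the LCM-lattice L_I onto the LCM-lattice L_{I'} that restricts to a bijection between the atoms (the minimal generators), then β_i(R/I) = β_i(R'/I') for all i ≥ 0, and pd(R/I) = pd(R'/I'). -/

import Mathlib

/-!
The proof computes `Torᵢ(R/I, K)` from a version of the Taylor resolution indexed by tuples of
generators instead of subsets. Let `T_k` be free on the tuples `g : Fin k → Fin μ`, with `k`-th
boundary `e_g ↦ ∑ᵢ (-1)ⁱ x^(lcm g - lcm (∂ᵢ g)) e_(∂ᵢ g)`, where `∂ᵢ` omits the `i`-th entry.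
Sending `e_g` to `x^(lcm g) e_g` embeds `T` into the unweighted complex of a simplex
(`homog_taylorD`, `homog_injective`). In multidegree `v`, coning off with a generator dividing `x^v`
contracts the unweighted complex and preserves `T`, so `T` is exact (`taylorD_exact`), and the
image of `T_1` in `T_0 = R` is `I` (`taylorAug_exact`).

After tensoring with `K` the coefficient `x^(lcm g - lcm (∂ᵢ g))` becomes `1` if
`lcm g = lcm (∂ᵢ g)` and `0` otherwise (`taylorD_rTensor`). Hence the reduced complex depends only
on which generators divide which lcm's, and this data is transported by an isomorphism of
LCM-lattices matching the generators (`exists_equiv`). Working with tuples makes the relabelling of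
the generators free of signs.

Mathlib's `Tor` is derived in its second argument, here `K`, while `T` resolves the first. That
`Tor` can nevertheless be computed from `T` is shown by dimension shifting: the functor
`A ↦ A ⊗ P_•`, for a projective resolution `P_•` of `N`, is exact and sends flat modules to
complexes acyclic in positive degrees, so the long exact sequence identifies `Tor_(k+1)(M, N)` with
the kernel of `Z_k ⊗ N → T_k ⊗ N`, where `Z_k` is the `k`-th syzygy (`tor_syzygy`).
-/

open CategoryTheory

/-- The `i`-th total Betti number `βᵢ(R/I) = dim_K Torᵢ^R(R/I, K)` of `R/I`, where
`R = K[x₁,…,xₙ]`, `K` is an `R`-module via evaluation of polynomials at `0`, and the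
`K`-vector space structure on the Tor module is by restriction of scalars along
`K → R`. -/
noncomputable def bettiNumber (K : Type) [Field K] {n : ℕ}
    (I : Ideal (MvPolynomial (Fin n) K)) (i : ℕ) : Cardinal := by
  letI : Module (MvPolynomial (Fin n) K) K :=
    Module.compHom K (MvPolynomial.aeval (fun _ : Fin n => (0 : K))).toRingHom
  let M := ((Tor (ModuleCat (MvPolynomial (Fin n) K)) i).obj
      (ModuleCat.of _ ((MvPolynomial (Fin n) K) ⧸ I))).obj (ModuleCat.of _ K)
  letI : Module K M := Module.compHom M (MvPolynomial.C : K →+* MvPolynomial (Fin n) K)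
  exact Module.rank K M

/-- The projective dimension `pd(R/I) = max {i : βᵢ(R/I) ≠ 0}` of `R/I` as an
`R`-module, `R = K[x₁,…,xₙ]`. -/
noncomputable def pdim (K : Type) [Field K] {n : ℕ}
    (I : Ideal (MvPolynomial (Fin n) K)) : ℕ :=
  sSup {i : ℕ | bettiNumber K I i ≠ 0}

/-- The monomial ideal of `K[x₁,…,xₙ]` whose (minimal) monomial generators are given by
the exponent vectors `m j : Fin n → ℕ`, `j = 1,…,μ`. -/
noncomputable def monIdeal (K : Type) [Field K] {n μ : ℕ} (m : Fin μ → (Fin n → ℕ)) :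
    Ideal (MvPolynomial (Fin n) K) :=
  Ideal.span (Set.range fun j =>
    MvPolynomial.monomial (Finsupp.equivFunOnFinite.symm (m j)) (1 : K))

/-- The LCM-lattice of the monomials with exponent vectors `m j`, `j = 1,…,μ`:
the set `{lcm(S) : S ⊆ {m₁,…,m_μ}}` (with `lcm ∅ = 1`, i.e. the exponent vector `0`),
ordered by divisibility, i.e. the pointwise order on exponent vectors (`lcm` being the
pointwise `⊔`). -/
abbrev lcmLattice {n μ : ℕ} (m : Fin μ → (Fin n → ℕ)) : Type :=
  {v : Fin n → ℕ // ∃ S : Finset (Fin μ), v = S.sup m}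

/-! ### Tor through flat resolutions of the first argument -/

open MonoidalCategory in
/-- The functor `A ↦ A ⊗ P_•` for a projective resolution `P_•` of `N`. -/
noncomputable abbrev tensorRes {R : Type} [CommRing R] {N : ModuleCat.{0} R}
    (P : ProjectiveResolution N) : ModuleCat.{0} R ⥤ ChainComplex (ModuleCat.{0} R) ℕ where
  obj A := ((tensorLeft A).mapHomologicalComplex _).obj P.complex
  map f :=
    { f := fun i => f ▷ P.complex.X i
      comm' := fun i j _ => (whisker_exchange f (P.complex.d i j)).symm }
  map_id A := by
    ext i : 1
    exact id_whiskerRight _ _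
  map_comp f g := by
    ext i : 1
    exact comp_whiskerRight _ _ _

open MonoidalCategory in
instance {R : Type} [CommRing R] {N : ModuleCat.{0} R}
    (P : ProjectiveResolution N) : (tensorRes P).PreservesZeroMorphisms where
  map_zero A B := by
    ext i : 1
    exact MonoidalPreadditive.zero_whiskerRight

/-- The functor `A ↦ A ⊗ P_•` is exact, since every `P_i` is projective, hence flat. -/
theorem tensorRes_shortExact {R : Type} [CommRing R] {N : ModuleCat.{0} R}
    (P : ProjectiveResolution N) (S : ShortComplex (ModuleCat.{0} R)) (hS : S.ShortExact) :
    (S.map (tensorRes P)).ShortExact := by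
  refine HomologicalComplex.shortExact_of_degreewise_shortExact _ fun i => ?_
  have : Module.Projective R (P.complex.X i) :=
    (IsProjective.iff_projective (P.complex.X i)).2 (P.projective i)
  have : Module.Flat R (P.complex.X i) := inferInstance
  exact hS.map_of_exact (MonoidalCategory.tensorRight (P.complex.X i))

theorem tensorRes_isZero {R : Type} [CommRing R] {N : ModuleCat.{0} R}
    (P : ProjectiveResolution N) (A : ModuleCat.{0} R) [Module.Flat R A] (i : ℕ) :
    Limits.IsZero (((tensorRes P).obj A).homology (i + 1)) := by
  have h : (P.complex.sc (i + 1)).Exact := P.complex_exactAt_succ i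
  have h2 : ((P.complex.sc (i + 1)).map (MonoidalCategory.tensorLeft A)).Exact :=
    Module.Flat.lTensor_shortComplex_exact A _ h
  generalize i + 1 = k at *
  have h3 : (((tensorRes P).obj A).sc k).Exact := h2
  have h4 : ((tensorRes P).obj A).ExactAt k := h3
  exact h4.isZero_homology

/-- `Tor_i(A, N)` is the `i`-th homology of `A ⊗ P_•`. -/
noncomputable def torIso {R : Type} [CommRing R] {N : ModuleCat.{0} R}
    (P : ProjectiveResolution N) (A : ModuleCat.{0} R) (i : ℕ) :
    ((Tor (ModuleCat.{0} R) i).obj A).obj N ≅ ((tensorRes P).obj A).homology i :=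
  P.isoLeftDerivedObj (MonoidalCategory.tensorLeft A) i

/-- Dimension shifting in the first argument of `Tor`. -/
theorem tor_shift {R : Type} [CommRing R] (N : ModuleCat.{0} R)
    (S : ShortComplex (ModuleCat.{0} R)) (hS : S.ShortExact) [Module.Flat R S.X₂] (i : ℕ) :
    Nonempty (((Tor (ModuleCat.{0} R) (i + 2)).obj S.X₃).obj N ≃ₗ[R]
      ((Tor (ModuleCat.{0} R) (i + 1)).obj S.X₁).obj N) := by
  let P := projectiveResolution N
  have h := tensorRes_shortExact P S hS
  exact ⟨(torIso P _ _ ≪≫ h.δIso (i + 2) (i + 1) (by simp) (tensorRes_isZero P S.X₂ _)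
    (tensorRes_isZero P S.X₂ _) ≪≫ (torIso P _ _).symm).toLinearEquiv⟩

/-- `H_0(A ⊗ P_•) ≅ A ⊗ N`. -/
noncomputable def homologyZeroIso {R : Type} [CommRing R] {N : ModuleCat.{0} R}
    (P : ProjectiveResolution N) (A : ModuleCat.{0} R) :
    ((tensorRes P).obj A).homology 0 ≅ MonoidalCategoryStruct.tensorObj A N :=
  have := (inferInstance : Limits.PreservesFiniteColimits (MonoidalCategory.tensorLeft A))
  ChainComplex.isoHomologyι₀ _ ≪≫ asIso (P.fromLeftDerivedZero' (MonoidalCategory.tensorLeft A))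

open MonoidalCategory in
theorem homologyZeroIso_naturality {R : Type} [CommRing R] {N : ModuleCat.{0} R}
    (P : ProjectiveResolution N) {A B : ModuleCat.{0} R} (f : A ⟶ B) :
    HomologicalComplex.homologyMap ((tensorRes P).map f) 0 ≫ (homologyZeroIso P B).hom =
      (homologyZeroIso P A).hom ≫ f ▷ N := by
  have h : HomologicalComplex.opcyclesMap ((tensorRes P).map f) 0 ≫
      P.fromLeftDerivedZero' (tensorLeft B) =
      P.fromLeftDerivedZero' (tensorLeft A) ≫ f ▷ N := by
    rw [← cancel_epi (HomologicalComplex.pOpcycles _ _)]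
    erw [HomologicalComplex.p_opcyclesMap_assoc,
      ProjectiveResolution.pOpcycles_comp_fromLeftDerivedZero',
      ProjectiveResolution.pOpcycles_comp_fromLeftDerivedZero'_assoc]
    exact (whisker_exchange f (P.π.f 0)).symm
  simp only [homologyZeroIso, Iso.trans_hom, Category.assoc, asIso_hom]
  erw [← h, ← HomologicalComplex.homologyι_naturality_assoc]
  rfl

/-- The start of dimension shifting: `Tor_1(C, N)` is the kernel of `A ⊗ N → B ⊗ N` for a short
exact sequence `0 → A → B → C → 0` with `B` flat. -/
theorem tor_one {R : Type} [CommRing R] (N : ModuleCat.{0} R)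
    (S : ShortComplex (ModuleCat.{0} R)) (hS : S.ShortExact) [Module.Flat R S.X₂] :
    Nonempty (((Tor (ModuleCat.{0} R) 1).obj S.X₃).obj N ≃ₗ[R]
      (LinearMap.ker (S.f.hom.rTensor N))) := by
  let P := projectiveResolution N
  have h := tensorRes_shortExact P S hS
  have hm := h.mono_δ 1 0 (by simp) (tensorRes_isZero P S.X₂ 0)
  have he := h.homology_exact₁ 1 0 (by simp)
  rw [ShortComplex.ShortExact.moduleCat_exact_iff_function_exact] at he
  rw [ModuleCat.mono_iff_injective] at hm
  have hn := homologyZeroIso_naturality P S.f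
  let g := (h.δ 1 0 (by simp)) ≫ (homologyZeroIso P S.X₁).hom
  have hg : Function.Injective g.hom := by
    exact ((homologyZeroIso P S.X₁).toLinearEquiv.injective).comp hm
  have hr : LinearMap.range g.hom = LinearMap.ker (S.f.hom.rTensor N) := by
    apply le_antisymm
    · rintro _ ⟨x, rfl⟩
      have h1 := congr(ModuleCat.Hom.hom $hn (h.δ 1 0 (by simp) x))
      have h2 := (he (h.δ 1 0 (by simp) x)).2 ⟨x, rfl⟩
      exact h1.symm.trans ((congrArg (homologyZeroIso P S.X₂).hom.hom h2).trans (map_zero _))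
    · intro y hy
      have h1 := congr(ModuleCat.Hom.hom $hn ((homologyZeroIso P S.X₁).inv y))
      have hy' : (homologyZeroIso P S.X₁).hom ((homologyZeroIso P S.X₁).inv y) = y := by simp
      have h2 : (homologyZeroIso P S.X₂).hom.hom
          ((HomologicalComplex.homologyMap ((tensorRes P).map S.f) 0).hom
            ((homologyZeroIso P S.X₁).inv y)) = 0 :=
        h1.trans ((congrArg (S.f.hom.rTensor N) hy').trans hy)
      have h3 := (homologyZeroIso P S.X₂).toLinearEquiv.injective (h2.trans (map_zero _).symm)
      obtain ⟨x, hx⟩ := (he _).1 h3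
      exact ⟨x, (congrArg (homologyZeroIso P S.X₁).hom hx).trans hy'⟩
  exact ⟨(torIso P S.X₃ 1).toLinearEquiv ≪≫ₗ LinearEquiv.ofInjective g.hom hg ≪≫ₗ
    LinearEquiv.ofEq _ _ hr⟩

theorem tor_zero {R : Type} [CommRing R] (A N : ModuleCat.{0} R) :
    Nonempty (((Tor (ModuleCat.{0} R) 0).obj A).obj N ≃ₗ[R] TensorProduct R A N) :=
  let P := projectiveResolution N
  ⟨(torIso P A 0 ≪≫ homologyZeroIso P A).toLinearEquiv⟩

theorem shortExact_of_exact {R A B C : Type} [CommRing R] [AddCommGroup A] [AddCommGroup B]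
    [AddCommGroup C] [Module R A] [Module R B] [Module R C] (f : A →ₗ[R] B) (g : B →ₗ[R] C)
    (hf : Function.Injective f) (hg : Function.Surjective g) (h : Function.Exact f g) :
    (ShortComplex.mk (ModuleCat.ofHom f) (ModuleCat.ofHom g)
      (ModuleCat.hom_ext h.linearMap_comp_eq_zero)).ShortExact where
  exact := (ShortComplex.ShortExact.moduleCat_exact_iff_function_exact _).2 h
  mono_f := (ModuleCat.mono_iff_injective _).2 hf
  epi_g := (ModuleCat.epi_iff_surjective _).2 hg

/-- Dimension shifting along a flat resolution `T` of `M`: `Tor_(k+1)(M, N)` is the kernel of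
`Z_k ⊗ N → T_k ⊗ N`, where `Z_k = range (d k)` is the `k`-th syzygy of `M`. -/
theorem tor_syzygy {R : Type} [CommRing R] (N : ModuleCat.{0} R) {T : ℕ → Type}
    [∀ k, AddCommGroup (T k)] [∀ k, Module R (T k)] [∀ k, Module.Flat R (T k)]
    (d : ∀ k, T (k + 1) →ₗ[R] T k) (hd : ∀ k, Function.Exact (d (k + 1)) (d k))
    {M : Type} [AddCommGroup M] [Module R M] (ε : T 0 →ₗ[R] M) (hε : Function.Surjective ε)
    (hdε : Function.Exact (d 0) ε) (k : ℕ) :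
    Nonempty (((Tor (ModuleCat.{0} R) (k + 1)).obj (ModuleCat.of R M)).obj N ≃ₗ[R]
      LinearMap.ker ((LinearMap.range (d k)).subtype.rTensor N)) := by
  have h0 := shortExact_of_exact (LinearMap.range (d 0)).subtype ε (Submodule.injective_subtype _)
    hε (LinearMap.exact_iff.2 (by simpa [LinearMap.exact_iff] using hdε))
  have hs := fun k => shortExact_of_exact (LinearMap.range (d (k + 1))).subtype
    (d k).rangeRestrict (Submodule.injective_subtype _) (LinearMap.surjective_rangeRestrict _)
    (LinearMap.exact_iff.2 (by simpa [LinearMap.exact_iff] using hd k))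
  -- Iterated shifting; the index `j` is free because each shift lowers the degree by one.
  have hone : ∀ k, ∀ j, Nonempty (((Tor (ModuleCat.{0} R) (j + 1 + k)).obj
      (ModuleCat.of R (LinearMap.range (d 0)))).obj N ≃ₗ[R]
      ((Tor (ModuleCat.{0} R) (j + 1)).obj (ModuleCat.of R (LinearMap.range (d k)))).obj N) := by
    intro k
    induction k with
    | zero => exact fun j => ⟨LinearEquiv.refl _ _⟩
    | succ k ih =>
      intro j
      obtain ⟨e₁⟩ := ih (j + 1)
      obtain ⟨e₂⟩ := @tor_shift _ _ N _ (hs k) (inferInstanceAs (Module.Flat R (T (k + 1)))) j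
      rw [show j + 1 + (k + 1) = j + 1 + 1 + k by omega]
      exact ⟨e₁ ≪≫ₗ e₂⟩
  cases k with
  | zero => exact @tor_one _ _ N _ h0 (inferInstanceAs (Module.Flat R (T 0)))
  | succ k =>
    obtain ⟨e₁⟩ := @tor_shift _ _ N _ h0 (inferInstanceAs (Module.Flat R (T 0))) k
    obtain ⟨e₂⟩ := hone k 0
    obtain ⟨e₃⟩ := @tor_one _ _ N _ (hs k) (inferInstanceAs (Module.Flat R (T (k + 1))))
    rw [show 0 + 1 + k = k + 1 by omega] at e₂
    exact ⟨e₁ ≪≫ₗ e₂ ≪≫ₗ e₃⟩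

/-! ### Ranks of the tensored complex -/

/-- The `K`-rank of an `R`-module `X`, with `K` acting through `K → R`, read off from a presentation
`V → X` of `X` by a `K`-vector space with kernel `W`. -/
theorem rank_compHom_eq {K R V X : Type} [Field K] [CommRing R] [Algebra K R] [AddCommGroup V]
    [Module K V] [AddCommGroup X] [Module R X] (ψ : V →+ X) (hψ : Function.Surjective ψ)
    (hsmul : ∀ (c : K) v, ψ (c • v) = algebraMap K R c • ψ v) (W : Submodule K V)
    (hW : ∀ v, ψ v = 0 ↔ v ∈ W) :
    @Module.rank K X _ _ (Module.compHom X (algebraMap K R)) = Module.rank K (V ⧸ W) := by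
  let _ : Module K X := Module.compHom X (algebraMap K R)
  let ψ' : V →ₗ[K] X := { ψ with map_smul' := hsmul }
  have hker : W = LinearMap.ker ψ' := by
    ext v
    exact (hW v).symm
  subst hker
  exact (ψ'.quotKerEquivOfSurjective hψ).rank_eq.symm

/-- If `A → B → C → 0` is exact and `A ⊗ N → B ⊗ N` is identified with a `K`-linear map
`F : V' → V`, then `C ⊗ N` has the `K`-rank of the cokernel of `F`. -/
theorem rank_tensor_zero {K R A B C N V V' X : Type} [Field K] [CommRing R] [Algebra K R]
    [AddCommGroup A] [AddCommGroup B] [AddCommGroup C] [AddCommGroup N] [Module R A] [Module R B]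
    [Module R C] [Module R N] [AddCommGroup V] [Module K V] [Module R V] [IsScalarTower K R V]
    [AddCommGroup V'] [Module K V'] [Module R V']
    [AddCommGroup X] [Module R X]
    (f : A →ₗ[R] B) (g : B →ₗ[R] C) (h : Function.Exact f g) (hg : Function.Surjective g)
    (eA : TensorProduct R A N ≃ₗ[R] V') (eB : TensorProduct R B N ≃ₗ[R] V)
    (F : V' →ₗ[K] V) (hF : ∀ x, eB (f.rTensor N x) = F (eA x))
    (eX : X ≃ₗ[R] TensorProduct R C N) :
    @Module.rank K X _ _ (Module.compHom X (algebraMap K R)) =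
      Module.rank K (V ⧸ LinearMap.range F) := by
  have hex := _root_.rTensor_exact N h hg
  let ψ : V →ₗ[R] X := eX.symm.toLinearMap ∘ₗ g.rTensor N ∘ₗ eB.symm.toLinearMap
  refine rank_compHom_eq ψ.toAddMonoidHom ?_ ?_ _ ?_
  · exact eX.symm.surjective.comp ((LinearMap.rTensor_surjective N hg).comp eB.symm.surjective)
  · intro c v
    have : c • v = algebraMap K R c • v := (algebraMap_smul R c v).symm
    rw [this]
    exact map_smul ψ _ _
  · intro v
    have : ψ v = 0 ↔ g.rTensor N (eB.symm v) = 0 := by simp [ψ]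
    refine this.trans ((hex _).trans ⟨?_, ?_⟩)
    · rintro ⟨x, hx⟩
      exact ⟨eA x, by rw [← hF, hx, LinearEquiv.apply_symm_apply]⟩
    · rintro ⟨x, rfl⟩
      exact ⟨eA.symm x, by
        rw [LinearEquiv.eq_symm_apply, hF, LinearEquiv.apply_symm_apply]⟩

/-- The dimension of the homology `ker G / im F`. The composite `G ∘ F` is not required to vanish:
the quotient is by the part of `im F` inside `ker G`. -/
noncomputable def homologyRank {K V₀ V₁ V₂ : Type} [Field K] [AddCommGroup V₀] [Module K V₀]
    [AddCommGroup V₁] [Module K V₁] [AddCommGroup V₂] [Module K V₂]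
    (F : V₂ →ₗ[K] V₁) (G : V₁ →ₗ[K] V₀) : Cardinal :=
  Module.rank K (LinearMap.ker G ⧸ (LinearMap.range F).submoduleOf (LinearMap.ker G))

/-- If `A → B → C` is exact with image `Z ⊆ C`, and its tensor product with `N` is identified with
`K`-linear maps `F`, `G`, then the kernel of `Z ⊗ N → C ⊗ N` has the `K`-rank of the homology
`ker G / im F`, because `Z ⊗ N` is the cokernel of `A ⊗ N → B ⊗ N`. -/
theorem rank_tensor_succ {K R A B C N V₀ V₁ V₂ X : Type} [Field K] [CommRing R] [Algebra K R]
    [AddCommGroup A] [AddCommGroup B] [AddCommGroup C] [AddCommGroup N] [Module R A] [Module R B]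
    [Module R C] [Module R N] [AddCommGroup V₀] [Module K V₀] [Module R V₀]
    [AddCommGroup V₁] [Module K V₁] [Module R V₁] [IsScalarTower K R V₁]
    [AddCommGroup V₂] [Module K V₂] [Module R V₂]
    [AddCommGroup X] [Module R X]
    (f : A →ₗ[R] B) (g : B →ₗ[R] C) (h : Function.Exact f g)
    (eA : TensorProduct R A N ≃ₗ[R] V₂) (eB : TensorProduct R B N ≃ₗ[R] V₁)
    (eC : TensorProduct R C N ≃ₗ[R] V₀)
    (F : V₂ →ₗ[K] V₁) (hF : ∀ x, eB (f.rTensor N x) = F (eA x))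
    (G : V₁ →ₗ[K] V₀) (hG : ∀ x, eC (g.rTensor N x) = G (eB x))
    (eX : X ≃ₗ[R] LinearMap.ker ((LinearMap.range g).subtype.rTensor N)) :
    @Module.rank K X _ _ (Module.compHom X (algebraMap K R)) = homologyRank F G := by
  have hfg : Function.Exact f g.rangeRestrict := by simpa [LinearMap.exact_iff] using h
  have hex := _root_.rTensor_exact N hfg g.surjective_rangeRestrict
  have hcomp : ∀ x, (LinearMap.range g).subtype.rTensor N (g.rangeRestrict.rTensor N x) =
      g.rTensor N x := by
    intro x
    rw [← LinearMap.comp_apply, ← LinearMap.rTensor_comp]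
    rfl
  let φ : V₁ →ₗ[R] TensorProduct R (LinearMap.range g) N :=
    g.rangeRestrict.rTensor N ∘ₗ eB.symm.toLinearMap
  have hφ : ∀ v, (LinearMap.range g).subtype.rTensor N (φ v) = 0 ↔ G v = 0 := by
    intro v
    have h1 := hG (eB.symm v)
    rw [LinearEquiv.apply_symm_apply] at h1
    rw [← h1, LinearMap.comp_apply, hcomp]
    simp
  let ψ : LinearMap.ker G →+ X := eX.symm.toLinearMap.toAddMonoidHom.comp
    { toFun := fun v => ⟨φ v, (hφ v).2 v.2⟩
      map_zero' := by ext1; exact map_zero φ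
      map_add' := fun x y => by ext1; exact map_add φ _ _ }
  refine rank_compHom_eq ψ ?_ ?_ _ ?_
  · refine eX.symm.surjective.comp ?_
    rintro ⟨y, hy⟩
    obtain ⟨x, rfl⟩ := LinearMap.rTensor_surjective N g.surjective_rangeRestrict y
    have hx : φ (eB x) = g.rangeRestrict.rTensor N x := by simp [φ]
    exact ⟨⟨eB x, (hφ _).1 (by rw [hx]; exact hy)⟩, Subtype.ext hx⟩
  · intro c v
    refine Eq.trans ?_ (map_smul eX.symm.toLinearMap (algebraMap K R c) _)
    refine congrArg eX.symm.toLinearMap (Subtype.ext ?_)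
    have : c • (v : V₁) = algebraMap K R c • (v : V₁) := (algebraMap_smul R c _).symm
    exact (congrArg φ this).trans (map_smul φ _ _)
  · intro v
    have : ψ v = 0 ↔ g.rangeRestrict.rTensor N (eB.symm v) = 0 := by
      refine (eX.symm.map_eq_zero_iff).trans ?_
      rw [← Subtype.coe_inj]
      rfl
    rw [Submodule.submoduleOf, Submodule.mem_comap]
    refine this.trans ((hex _).trans ⟨?_, ?_⟩)
    · rintro ⟨x, hx⟩
      exact ⟨eA x, by rw [← hF, hx, LinearEquiv.apply_symm_apply]; rfl⟩
    · rintro ⟨x, hx⟩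
      exact ⟨eA.symm x, by
        rw [LinearEquiv.eq_symm_apply, hF, LinearEquiv.apply_symm_apply, hx]; rfl⟩

section Taylor

open MvPolynomial

/-! ### The complex of all tuples and its cone contractions -/

/-- The alternating sum of faces on the free module on tuples, `e_g ↦ ∑ᵢ (-1)ⁱ w(g, i) e_(∂ᵢ g)`,
where `∂ᵢ g = g ∘ i.succAbove` omits the `i`-th entry of `g`. The complex is augmented: tuples of
length `k` sit in degree `k`, with the empty tuple in degree `0`. -/
noncomputable def faceMap {ι S : Type} [CommRing S] {k : ℕ}
    (w : (Fin (k + 1) → ι) → Fin (k + 1) → S) :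
    ((Fin (k + 1) → ι) →₀ S) →ₗ[S] ((Fin k → ι) →₀ S) :=
  Finsupp.linearCombination S fun g =>
    ∑ i : Fin (k + 1), Finsupp.single (g ∘ i.succAbove) ((-1) ^ (i : ℕ) * w g i)

theorem faceMap_single {ι S : Type} [CommRing S] {k : ℕ}
    (w : (Fin (k + 1) → ι) → Fin (k + 1) → S) (g : Fin (k + 1) → ι) (r : S) :
    faceMap w (Finsupp.single g r) =
      ∑ i : Fin (k + 1), Finsupp.single (g ∘ i.succAbove) ((-1) ^ (i : ℕ) * w g i * r) := by
  rw [faceMap, Finsupp.linearCombination_single, Finset.smul_sum]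
  exact Finset.sum_congr rfl fun i _ => by rw [Finsupp.smul_single, smul_eq_mul, mul_comm]

/-- The boundary with all weights equal to `1`. -/
noncomputable abbrev bdry (ι S : Type) [CommRing S] (k : ℕ) :
    ((Fin (k + 1) → ι) →₀ S) →ₗ[S] ((Fin k → ι) →₀ S) :=
  faceMap fun _ _ => 1

theorem bdry_single {ι S : Type} [CommRing S] {k : ℕ} (g : Fin (k + 1) → ι) (r : S) :
    bdry ι S k (Finsupp.single g r) =
      ∑ i : Fin (k + 1), ((-1 : ℤ) ^ (i : ℕ)) • Finsupp.single (g ∘ i.succAbove) r := by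
  rw [faceMap_single]
  refine Finset.sum_congr rfl fun i _ => ?_
  rw [Finsupp.smul_single]
  simp

theorem addHom_ext_monomial {α σ K M : Type} [Field K] [AddCommGroup M]
    {φ ψ : (α →₀ MvPolynomial σ K) →+ M}
    (h : ∀ f v a, φ (Finsupp.single f (monomial v a)) = ψ (Finsupp.single f (monomial v a))) :
    φ = ψ := by
  refine Finsupp.addHom_ext fun f r => ?_
  induction r using MvPolynomial.monomial_add_induction_on with
  | C a => exact h f 0 a
  | monomial_add v a r _ _ hr => rw [Finsupp.single_add, map_add, map_add, hr, h]

/-- The cone operator: on the part of multidegree `v`, prepend the vertex `c v` to each tuple. It is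
additive but not linear over the polynomial ring, as the vertex depends on the multidegree. -/
noncomputable def cone {ι σ K : Type} [Field K] (c : (σ →₀ ℕ) → ι) (k : ℕ) :
    ((Fin k → ι) →₀ MvPolynomial σ K) →+ ((Fin (k + 1) → ι) →₀ MvPolynomial σ K) :=
  Finsupp.liftAddHom fun f =>
    ((basisMonomials σ K).constr K fun v =>
      Finsupp.single (Fin.cons (c v) f : Fin (k + 1) → ι) (monomial v (1 : K))).toAddMonoidHom

theorem cone_single {ι σ K : Type} [Field K] (c : (σ →₀ ℕ) → ι) {k : ℕ} (f : Fin k → ι)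
    (v : σ →₀ ℕ) (a : K) :
    cone c k (Finsupp.single f (monomial v a)) =
      Finsupp.single (Fin.cons (c v) f : Fin (k + 1) → ι) (monomial v a) := by
  have : (monomial v a : MvPolynomial σ K) = a • basisMonomials σ K v := by
    simp [smul_monomial]
  rw [cone, Finsupp.liftAddHom_apply_single, this]
  simp only [LinearMap.toAddMonoidHom_coe, map_smul, Module.Basis.constr_basis]
  simp [smul_monomial]

theorem cons_comp_succAbove {ι : Type} {k : ℕ} (c : ι) (f : Fin (k + 1) → ι) (i : Fin (k + 1)) :
    (Fin.cons c f : Fin (k + 2) → ι) ∘ i.succ.succAbove =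
      (Fin.cons c (f ∘ i.succAbove) : Fin (k + 1) → ι) := by
  funext j
  refine Fin.cases ?_ (fun j => ?_) j <;> simp

theorem cons_comp_succ {ι : Type} {k : ℕ} (c : ι) (f : Fin k → ι) :
    (Fin.cons c f : Fin (k + 1) → ι) ∘ (0 : Fin (k + 1)).succAbove = f := by
  funext j
  simp

/-- The cone operator is a contracting homotopy, `∂ h + h ∂ = id`. -/
theorem bdry_cone {ι σ K : Type} [Field K] (c : (σ →₀ ℕ) → ι) (k : ℕ)
    (z : (Fin (k + 1) → ι) →₀ MvPolynomial σ K) :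
    bdry ι _ (k + 1) (cone c (k + 1) z) = z - cone c k (bdry ι _ k z) := by
  suffices h : (bdry ι (MvPolynomial σ K) (k + 1)).toAddMonoidHom.comp (cone c (k + 1)) =
      AddMonoidHom.id _ - (cone c k).comp (bdry ι (MvPolynomial σ K) k).toAddMonoidHom from
    DFunLike.congr_fun h z
  apply addHom_ext_monomial
  intro f v a
  simp only [AddMonoidHom.comp_apply, AddMonoidHom.sub_apply, AddMonoidHom.id_apply,
    LinearMap.toAddMonoidHom_coe, cone_single, bdry_single]
  rw [Fin.sum_univ_succ, cons_comp_succ]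
  simp only [map_sum, map_zsmul, cone_single, cons_comp_succAbove, Fin.val_succ, Fin.val_zero,
    pow_succ, pow_zero, one_smul, mul_neg, mul_one, neg_smul, Finset.sum_neg_distrib,
    sub_eq_add_neg]

theorem bdry_cone_zero {ι σ K : Type} [Field K] (c : (σ →₀ ℕ) → ι)
    (z : (Fin 0 → ι) →₀ MvPolynomial σ K) :
    bdry ι _ 0 (cone c 0 z) = z := by
  suffices h : (bdry ι (MvPolynomial σ K) 0).toAddMonoidHom.comp (cone c 0) =
      AddMonoidHom.id _ from DFunLike.congr_fun h z
  apply addHom_ext_monomial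
  intro f v a
  simp [cone_single, bdry_single]

/-- `∂ ∂ = 0`. Every tuple is a cone `h y` with constant vertex, and `∂ ∂ h y = h ∂ ∂ y` by the
homotopy formula, which allows induction on the length. -/
theorem bdry_bdry {ι σ K : Type} [Field K] (k : ℕ)
    (z : (Fin (k + 2) → ι) →₀ MvPolynomial σ K) :
    bdry ι _ k (bdry ι _ (k + 1) z) = 0 := by
  suffices h : (bdry ι (MvPolynomial σ K) k).toAddMonoidHom.comp
      (bdry ι (MvPolynomial σ K) (k + 1)).toAddMonoidHom = 0 from DFunLike.congr_fun h z
  apply addHom_ext_monomial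
  intro g v a
  obtain ⟨c, f, rfl⟩ : ∃ c f, g = (Fin.cons c f : Fin (k + 2) → ι) :=
    ⟨g 0, Fin.tail g, (Fin.cons_self_tail g).symm⟩
  rw [← cone_single (fun _ => c)]
  simp only [AddMonoidHom.comp_apply, LinearMap.toAddMonoidHom_coe, bdry_cone, map_sub,
    AddMonoidHom.zero_apply]
  cases k with
  | zero => rw [bdry_cone_zero, sub_self]
  | succ k => rw [bdry_cone, bdry_bdry k, map_zero, sub_zero, sub_self]

/-! ### The Taylor resolution on tuples -/

/-- The exponent vector of the lcm of the generators listed by the tuple `g`. -/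
noncomputable def lcmExp {n μ k : ℕ} (m : Fin μ → (Fin n → ℕ)) (g : Fin k → Fin μ) :
    Fin n →₀ ℕ :=
  Finsupp.equivFunOnFinite.symm (Finset.univ.sup (m ∘ g))

theorem lcmExp_le_iff {n μ k : ℕ} (m : Fin μ → (Fin n → ℕ)) (g : Fin k → Fin μ)
    (v : Fin n →₀ ℕ) : lcmExp m g ≤ v ↔ ∀ i, m (g i) ≤ ⇑v := by
  rw [← Finsupp.coe_le_coe]
  simp [lcmExp, Finset.sup_le_iff]

theorem lcmExp_comp_le {n μ k l : ℕ} (m : Fin μ → (Fin n → ℕ)) (g : Fin k → Fin μ)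
    (s : Fin l → Fin k) : lcmExp m (g ∘ s) ≤ lcmExp m g :=
  (lcmExp_le_iff _ _ _).2 fun i => (lcmExp_le_iff m g _).1 le_rfl (s i)

/-- The differential of the Taylor complex on tuples,
`e_g ↦ ∑ᵢ (-1)ⁱ x^(lcm g - lcm (∂ᵢ g)) e_(∂ᵢ g)`. The subtraction of exponents is a genuine one, by
`lcmExp_comp_le`. -/
noncomputable abbrev taylorD (K : Type) [Field K] {n μ : ℕ} (m : Fin μ → (Fin n → ℕ)) (k : ℕ) :
    ((Fin (k + 1) → Fin μ) →₀ MvPolynomial (Fin n) K) →ₗ[MvPolynomial (Fin n) K]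
      ((Fin k → Fin μ) →₀ MvPolynomial (Fin n) K) :=
  faceMap fun g i => monomial (lcmExp m g - lcmExp m (g ∘ i.succAbove)) 1

/-- The embedding `e_g ↦ x^(lcm g) e_g` of the Taylor complex into the unweighted complex. -/
noncomputable def homog (K : Type) [Field K] {n μ : ℕ} (m : Fin μ → (Fin n → ℕ)) (k : ℕ) :
    ((Fin k → Fin μ) →₀ MvPolynomial (Fin n) K) →ₗ[MvPolynomial (Fin n) K]
      ((Fin k → Fin μ) →₀ MvPolynomial (Fin n) K) :=
  Finsupp.linearCombination _ fun f => Finsupp.single f (monomial (lcmExp m f) 1)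

theorem homog_single (K : Type) [Field K] {n μ : ℕ} (m : Fin μ → (Fin n → ℕ)) {k : ℕ}
    (f : Fin k → Fin μ) (r : MvPolynomial (Fin n) K) :
    homog K m k (Finsupp.single f r) = Finsupp.single f (monomial (lcmExp m f) 1 * r) := by
  rw [homog, Finsupp.linearCombination_single, Finsupp.smul_single, smul_eq_mul, mul_comm]

theorem homog_injective (K : Type) [Field K] {n μ : ℕ} (m : Fin μ → (Fin n → ℕ)) (k : ℕ) :
    Function.Injective (homog K m k) := by
  have happ : ∀ z f, homog K m k z f = monomial (lcmExp m f) 1 * z f := by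
    intro z f
    induction z using Finsupp.induction_linear with
    | zero => simp
    | add x y hx hy => rw [map_add, Finsupp.add_apply, hx, hy, Finsupp.add_apply, mul_add]
    | single g r =>
      rw [homog_single]
      by_cases h : g = f
      · subst h; simp
      · simp [Finsupp.single_eq_of_ne' h]
  rw [injective_iff_map_eq_zero]
  intro z hz
  ext1 f
  have h := happ z f
  rw [hz] at h
  simpa using h.symm

theorem homog_taylorD (K : Type) [Field K] {n μ : ℕ} (m : Fin μ → (Fin n → ℕ)) (k : ℕ)
    (z : (Fin (k + 1) → Fin μ) →₀ MvPolynomial (Fin n) K) :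
    homog K m k (taylorD K m k z) = bdry _ _ k (homog K m (k + 1) z) := by
  induction z using Finsupp.induction_linear with
  | zero => simp
  | add x y hx hy => simp only [map_add, hx, hy]
  | single g r =>
    rw [homog_single, faceMap_single, faceMap_single, map_sum]
    refine Finset.sum_congr rfl fun i _ => ?_
    have h : (monomial (lcmExp m g) (1 : K)) = monomial (lcmExp m (g ∘ i.succAbove)) 1 *
        monomial (lcmExp m g - lcmExp m (g ∘ i.succAbove)) 1 := by
      rw [monomial_mul, add_tsub_cancel_of_le (lcmExp_comp_le m g _), one_mul]
    rw [homog_single, h]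
    refine congrArg (Finsupp.single _) ?_
    ring

/-- If `c v` is a generator dividing `x^v` whenever there is one, the cone operator preserves the
image of the Taylor complex in positive degrees. -/
theorem cone_homog (K : Type) [Field K] {n μ : ℕ} (m : Fin μ → (Fin n → ℕ)) (k : ℕ)
    (c : (Fin n →₀ ℕ) → Fin μ) (hc : ∀ v : Fin n →₀ ℕ, ∀ j, m j ≤ ⇑v → m (c v) ≤ ⇑v)
    (z : (Fin (k + 1) → Fin μ) →₀ MvPolynomial (Fin n) K) :
    ∃ w, homog K m (k + 2) w = cone c (k + 1) (homog K m (k + 1) z) := by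
  induction z using Finsupp.induction_linear with
  | zero => exact ⟨0, by simp⟩
  | add x y hx hy =>
    obtain ⟨w, hw⟩ := hx
    obtain ⟨w', hw'⟩ := hy
    exact ⟨w + w', by simp only [map_add, hw, hw']⟩
  | single f r =>
    induction r using MvPolynomial.induction_on' with
    | add x y hx hy =>
      obtain ⟨w, hw⟩ := hx
      obtain ⟨w', hw'⟩ := hy
      exact ⟨w + w', by simp only [Finsupp.single_add, map_add, hw, hw']⟩
    | monomial u a =>
      set v := lcmExp m f + u with hv
      have hle : lcmExp m (Fin.cons (c v) f : Fin (k + 2) → Fin μ) ≤ v := by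
        have hf := (lcmExp_le_iff m f v).1 (by simp [hv])
        rw [lcmExp_le_iff]
        exact Fin.cases (by simpa using hc v _ (hf 0)) (by simpa using hf)
      refine ⟨Finsupp.single (Fin.cons (c v) f)
        (monomial (v - lcmExp m (Fin.cons (c v) f : Fin (k + 2) → Fin μ)) a), ?_⟩
      rw [homog_single, homog_single, monomial_mul, monomial_mul, cone_single,
        add_tsub_cancel_of_le hle, one_mul]

theorem taylorD_exact (K : Type) [Field K] {n μ : ℕ} (m : Fin μ → (Fin n → ℕ)) (k : ℕ) :
    Function.Exact (taylorD K m (k + 1)) (taylorD K m k) := by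
  intro z
  constructor
  · intro hz
    rcases isEmpty_or_nonempty (Fin μ) with hμ | hμ
    · exact ⟨0, Subsingleton.elim _ _⟩
    have hc : ∀ v : Fin n →₀ ℕ, ∃ c : Fin μ, ∀ j, m j ≤ ⇑v → m c ≤ ⇑v := by
      intro v
      by_cases h : ∃ j, m j ≤ ⇑v
      · exact ⟨h.choose, fun _ _ => h.choose_spec⟩
      · exact ⟨Classical.arbitrary _, fun j hj => (h ⟨j, hj⟩).elim⟩
    choose c hc using hc
    obtain ⟨w, hw⟩ := cone_homog K m k c hc z
    refine ⟨w, homog_injective K m _ ?_⟩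
    rw [homog_taylorD, hw, bdry_cone, ← homog_taylorD, hz, map_zero, map_zero, sub_zero]
  · rintro ⟨w, rfl⟩
    apply homog_injective K m
    rw [homog_taylorD, homog_taylorD, bdry_bdry, map_zero]

/-- The augmentation `T_0 = R → R/I`. -/
noncomputable def taylorAug (K : Type) [Field K] {n μ : ℕ} (m : Fin μ → (Fin n → ℕ)) :
    ((Fin 0 → Fin μ) →₀ MvPolynomial (Fin n) K) →ₗ[MvPolynomial (Fin n) K]
      (MvPolynomial (Fin n) K ⧸ monIdeal K m) :=
  (Submodule.mkQ _) ∘ₗ Finsupp.lapply default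

theorem taylorAug_surjective (K : Type) [Field K] {n μ : ℕ} (m : Fin μ → (Fin n → ℕ)) :
    Function.Surjective (taylorAug K m) := by
  intro x
  obtain ⟨r, rfl⟩ := Submodule.mkQ_surjective _ x
  exact ⟨Finsupp.single default r, by simp [taylorAug]⟩

theorem taylorAug_exact (K : Type) [Field K] {n μ : ℕ} (m : Fin μ → (Fin n → ℕ)) :
    Function.Exact (taylorD K m 0) (taylorAug K m) := by
  have hD : ∀ (g : Fin 1 → Fin μ) (r : MvPolynomial (Fin n) K),
      taylorD K m 0 (Finsupp.single g r) = Finsupp.single default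
        (monomial (Finsupp.equivFunOnFinite.symm (m (g 0))) 1 * r) := by
    intro g r
    have h0 : lcmExp m (g ∘ (0 : Fin 1).succAbove) = 0 := by
      ext a
      simp [lcmExp]
    have h1 : lcmExp m g = Finsupp.equivFunOnFinite.symm (m (g 0)) := by
      simp [lcmExp]
    rw [faceMap_single, Fin.sum_univ_one, h0, h1, tsub_zero, Subsingleton.elim default
      (g ∘ (0 : Fin 1).succAbove)]
    simp
  intro z
  have hz : taylorAug K m z = 0 ↔ z default ∈ monIdeal K m := by
    simp only [taylorAug, LinearMap.comp_apply, Submodule.mkQ_apply, Finsupp.lapply_apply,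
      Submodule.Quotient.mk_eq_zero]
  rw [hz]
  constructor
  · intro h
    have hle : monIdeal K m ≤ (LinearMap.range (taylorD K m 0)).comap
        (Finsupp.lsingle (default : Fin 0 → Fin μ)) := by
      refine Ideal.span_le.2 ?_
      rintro _ ⟨j, rfl⟩
      exact ⟨Finsupp.single (fun _ => j) 1, by rw [hD, mul_one]; rfl⟩
    have hs : Finsupp.lsingle (R := MvPolynomial (Fin n) K) default (z default) = z := by
      rw [Finsupp.lsingle_apply]
      exact (Finsupp.unique_single z).symm
    have h' := hle h
    rw [Submodule.mem_comap, hs] at h'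
    exact h'
  · rintro ⟨w, rfl⟩
    clear hz
    induction w using Finsupp.induction_linear with
    | zero => simp
    | add x y hx hy =>
      rw [map_add, Finsupp.add_apply]
      exact Ideal.add_mem _ hx hy
    | single g r =>
      rw [hD, Finsupp.single_eq_same]
      exact Ideal.mul_mem_right _ _ (Ideal.subset_span ⟨_, rfl⟩)

/-! ### Betti numbers from the reduced complex -/

/-- `K` as a module over `K[x₁,…,xₙ]` by evaluation at `0`. -/
noncomputable abbrev evalZeroModule (K : Type) [Field K] (n : ℕ) :
    Module (MvPolynomial (Fin n) K) K :=
  Module.compHom K (MvPolynomial.aeval (fun _ : Fin n => (0 : K))).toRingHom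

open Classical in
/-- The Taylor differential tensored with `K`: the faces of `g` having the same lcm as `g`. -/
noncomputable abbrev reducedD (K : Type) [Field K] {n μ : ℕ} (m : Fin μ → (Fin n → ℕ)) (k : ℕ) :
    ((Fin (k + 1) → Fin μ) →₀ K) →ₗ[K] ((Fin k → Fin μ) →₀ K) :=
  faceMap fun g i => if lcmExp m (g ∘ i.succAbove) = lcmExp m g then 1 else 0

theorem taylorD_rTensor (K : Type) [Field K] {n μ : ℕ} (m : Fin μ → (Fin n → ℕ)) (k : ℕ) :
    letI := evalZeroModule K n
    ∀ x, TensorProduct.finsuppScalarLeft (MvPolynomial (Fin n) K) K (Fin k → Fin μ)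
        ((taylorD K m k).rTensor K x) =
      reducedD K m k (TensorProduct.finsuppScalarLeft (MvPolynomial (Fin n) K) K
        (Fin (k + 1) → Fin μ) x) := by
  let _ := evalZeroModule K n
  intro x
  have hsmul : ∀ (r : MvPolynomial (Fin n) K) (a : K),
    r • a = MvPolynomial.aeval (fun _ : Fin n => (0 : K)) r * a := fun _ _ => rfl
  induction x using TensorProduct.induction_on with
  | zero => simp only [map_zero]
  | add x y hx hy => simp only [map_add, hx, hy]
  | tmul z a =>
    induction z using Finsupp.induction_linear with
    | zero => simp only [TensorProduct.zero_tmul, map_zero]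
    | add x y hx hy => simp only [TensorProduct.add_tmul, map_add, hx, hy]
    | single g r =>
      have he : ∀ {l : ℕ} (f : Fin l → Fin μ) (s : MvPolynomial (Fin n) K),
          TensorProduct.finsuppScalarLeft (MvPolynomial (Fin n) K) K (Fin l → Fin μ)
            (Finsupp.single f s ⊗ₜ a) = Finsupp.single f (s • a) := by
        intro l f s
        rw [TensorProduct.finsuppScalarLeft_apply_tmul, Finsupp.sum_single_index]
        simp
      rw [LinearMap.rTensor_tmul, he, faceMap_single, faceMap_single, TensorProduct.sum_tmul,
        map_sum]
      refine Finset.sum_congr rfl fun i _ => ?_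
      rw [he]
      refine congrArg (Finsupp.single _) ?_
      -- Evaluation at `0` kills the weight unless it is the constant monomial.
      have hmon : MvPolynomial.aeval (fun _ : Fin n => (0 : K))
          (monomial (lcmExp m g - lcmExp m (g ∘ i.succAbove)) (1 : K)) =
          if lcmExp m (g ∘ i.succAbove) = lcmExp m g then 1 else 0 := by
        split_ifs with h
        · rw [h, tsub_self]
          simp
        · have hne : lcmExp m g - lcmExp m (g ∘ i.succAbove) ≠ 0 := fun h0 =>
            h (le_antisymm (lcmExp_comp_le m g _) (tsub_eq_zero_iff_le.1 h0))
          obtain ⟨a, ha⟩ := Finsupp.ne_iff.1 hne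
          rw [aeval_monomial, map_one, one_mul, Finsupp.prod]
          exact Finset.prod_eq_zero (Finsupp.mem_support_iff.2 ha) (zero_pow ha)
      rw [hsmul, hsmul, map_mul, map_mul, hmon]
      simp [mul_assoc]

theorem betti_zero (K : Type) [Field K] {n μ : ℕ} (m : Fin μ → (Fin n → ℕ)) :
    bettiNumber K (monIdeal K m) 0 =
      Module.rank K (((Fin 0 → Fin μ) →₀ K) ⧸ LinearMap.range (reducedD K m 0)) := by
  let _ := evalZeroModule K n
  have : IsScalarTower K (MvPolynomial (Fin n) K) K := ⟨fun c r a => by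
    change MvPolynomial.aeval (fun _ : Fin n => (0 : K)) (c • r) * a =
      c * (MvPolynomial.aeval (fun _ : Fin n => (0 : K)) r * a)
    rw [map_smul, smul_eq_mul, mul_assoc]⟩
  obtain ⟨e⟩ := tor_zero (ModuleCat.of (MvPolynomial (Fin n) K)
    (MvPolynomial (Fin n) K ⧸ monIdeal K m)) (ModuleCat.of (MvPolynomial (Fin n) K) K)
  exact rank_tensor_zero (taylorD K m 0) (taylorAug K m) (taylorAug_exact K m)
    (taylorAug_surjective K m) (TensorProduct.finsuppScalarLeft _ K _)
    (TensorProduct.finsuppScalarLeft _ K _) (reducedD K m 0) (taylorD_rTensor K m 0) e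

theorem betti_succ (K : Type) [Field K] {n μ : ℕ} (m : Fin μ → (Fin n → ℕ)) (k : ℕ) :
    bettiNumber K (monIdeal K m) (k + 1) =
      homologyRank (reducedD K m (k + 1)) (reducedD K m k) := by
  let _ := evalZeroModule K n
  have : IsScalarTower K (MvPolynomial (Fin n) K) K := ⟨fun c r a => by
    change MvPolynomial.aeval (fun _ : Fin n => (0 : K)) (c • r) * a =
      c * (MvPolynomial.aeval (fun _ : Fin n => (0 : K)) r * a)
    rw [map_smul, smul_eq_mul, mul_assoc]⟩
  obtain ⟨e⟩ := tor_syzygy (ModuleCat.of (MvPolynomial (Fin n) K) K)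
    (T := fun k => (Fin k → Fin μ) →₀ MvPolynomial (Fin n) K) (taylorD K m)
    (taylorD_exact K m) (taylorAug K m) (taylorAug_surjective K m) (taylorAug_exact K m) k
  exact rank_tensor_succ (taylorD K m (k + 1)) (taylorD K m k) (taylorD_exact K m k)
    (TensorProduct.finsuppScalarLeft _ K _) (TensorProduct.finsuppScalarLeft _ K _)
    (TensorProduct.finsuppScalarLeft _ K _) (reducedD K m (k + 1)) (taylorD_rTensor K m (k + 1))
    (reducedD K m k) (taylorD_rTensor K m k) e

/-- The Betti numbers depend only on which generators divide which lcm's of generators. -/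
theorem bettiNumber_congr (K : Type) [Field K] {n₁ n₂ μ : ℕ} (m₁ : Fin μ → (Fin n₁ → ℕ))
    (m₂ : Fin μ → (Fin n₂ → ℕ))
    (h : ∀ (S : Finset (Fin μ)) j, m₁ j ≤ S.sup m₁ ↔ m₂ j ≤ S.sup m₂) (i : ℕ) :
    bettiNumber K (monIdeal K m₁) i = bettiNumber K (monIdeal K m₂) i := by
  have key : ∀ {n : ℕ} (m : Fin μ → (Fin n → ℕ)) {k : ℕ} (g : Fin (k + 1) → Fin μ)
      (i : Fin (k + 1)), lcmExp m (g ∘ i.succAbove) = lcmExp m g ↔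
        ∀ j, m (g j) ≤ (Finset.univ.image (g ∘ i.succAbove)).sup m := by
    intro n m k g i
    rw [Finset.sup_image, (lcmExp_comp_le m g i.succAbove).ge_iff_eq.symm, lcmExp_le_iff]
    rfl
  have hD : ∀ k, reducedD K m₁ k = reducedD K m₂ k := by
    intro k
    unfold reducedD
    congr 1
    funext g i
    exact if_congr ((key m₁ g i).trans
      ((forall_congr' fun j => h _ (g j)).trans (key m₂ g i).symm)) rfl rfl
  cases i with
  | zero => rw [betti_zero, betti_zero, hD]
  | succ k => rw [betti_succ, betti_succ, hD, hD]

end Taylor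

/-! ### Relabelling along the lattice isomorphism -/

/-- The bijection of generators induced by the lattice isomorphism, which also matches the
divisibility relations between generators and lcm's, as `e` preserves joins. -/
theorem exists_equiv {n₁ n₂ μ₁ μ₂ : ℕ}
    (m₁ : Fin μ₁ → (Fin n₁ → ℕ)) (m₂ : Fin μ₂ → (Fin n₂ → ℕ))
    (h₁min : ∀ j k, j ≠ k → ¬ m₁ j ≤ m₁ k) (h₂min : ∀ j k, j ≠ k → ¬ m₂ j ≤ m₂ k)
    (e : lcmLattice m₁ ≃o lcmLattice m₂)
    (he : ∀ v : lcmLattice m₁,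
      (∃ j : Fin μ₁, (v.1 : Fin n₁ → ℕ) = m₁ j) ↔
        (∃ k : Fin μ₂, ((e v).1 : Fin n₂ → ℕ) = m₂ k)) :
    ∃ σ : Fin μ₁ ≃ Fin μ₂, ∀ (S : Finset (Fin μ₁)) j,
      m₁ j ≤ S.sup m₁ ↔ m₂ (σ j) ≤ S.sup (m₂ ∘ σ) := by
  let a₁ : Fin μ₁ → lcmLattice m₁ := fun j => ⟨m₁ j, {j}, by simp⟩
  have hex : ∀ j, ∃ k, (e (a₁ j)).1 = m₂ k := fun j => (he (a₁ j)).1 ⟨j, rfl⟩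
  choose σ hσ using hex
  have hinj : Function.Injective σ := by
    intro i j hij
    have h1 : e (a₁ i) = e (a₁ j) := Subtype.ext (by rw [hσ, hσ, hij])
    have h2 : m₁ i = m₁ j := congrArg Subtype.val (e.injective h1)
    by_contra hne
    exact h₁min i j hne h2.le
  have hsurj : Function.Surjective σ := by
    intro k
    obtain ⟨j, hj⟩ := (he (e.symm ⟨m₂ k, {k}, by simp⟩)).2 ⟨k, by simp⟩
    have h1 : a₁ j = e.symm ⟨m₂ k, {k}, by simp⟩ := Subtype.ext hj.symm
    have h2 : m₂ (σ j) = m₂ k := by rw [← hσ, h1, e.apply_symm_apply]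
    refine ⟨j, ?_⟩
    by_contra hne
    exact h₂min _ _ hne h2.le
  refine ⟨Equiv.ofBijective σ ⟨hinj, hsurj⟩, fun S j => ?_⟩
  change _ ↔ m₂ (σ j) ≤ S.sup (m₂ ∘ σ)
  let v : lcmLattice m₁ := ⟨S.sup m₁, S, rfl⟩
  let w : lcmLattice m₂ := ⟨S.sup (m₂ ∘ σ), S.image σ, by rw [Finset.sup_image]⟩
  have hvw : e v = w := by
    apply le_antisymm
    · rw [← OrderIso.le_symm_apply]
      refine Finset.sup_le (f := m₁) fun i hi => ?_
      have : a₁ i ≤ e.symm w := by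
        rw [OrderIso.le_symm_apply]
        change (e (a₁ i)).1 ≤ w.1
        rw [hσ]
        exact Finset.le_sup (f := m₂ ∘ σ) hi
      exact this
    · refine Finset.sup_le (f := m₂ ∘ σ) fun i hi => ?_
      have : e (a₁ i) ≤ e v := e.monotone (Finset.le_sup (f := m₁) hi)
      rw [Function.comp_apply, ← hσ]
      exact this
  have : a₁ j ≤ v ↔ e (a₁ j) ≤ w := by rw [← hvw, e.le_iff_le]
  refine this.trans ?_
  rw [← hσ]
  rfl

/-- Let `I ⊆ R` and `I' ⊆ R'` be monomial ideals in polynomial rings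
over the same field `K`, encoded by their minimal monomial generating sets (exponent
vectors of nonconstant monomials forming antichains under divisibility).  If there is a
lattice isomorphism from the LCM-lattice `L_I` onto the LCM-lattice `L_{I'}` that
restricts to a bijection between the atoms (the minimal generators), then
`βᵢ(R/I) = βᵢ(R'/I')` for all `i ≥ 0`, and `pd(R/I) = pd(R'/I')`. -/
theorem stmt12 (K : Type) [Field K] (n₁ n₂ μ₁ μ₂ : ℕ)
    (m₁ : Fin μ₁ → (Fin n₁ → ℕ)) (m₂ : Fin μ₂ → (Fin n₂ → ℕ))
    (h₁ne : ∀ j, m₁ j ≠ 0) (h₂ne : ∀ j, m₂ j ≠ 0)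
    (h₁min : ∀ j k, j ≠ k → ¬ m₁ j ≤ m₁ k) (h₂min : ∀ j k, j ≠ k → ¬ m₂ j ≤ m₂ k)
    (e : lcmLattice m₁ ≃o lcmLattice m₂)
    (he : ∀ v : lcmLattice m₁,
      (∃ j : Fin μ₁, (v.1 : Fin n₁ → ℕ) = m₁ j) ↔ (∃ k : Fin μ₂, ((e v).1 : Fin n₂ → ℕ) = m₂ k)) :
    (∀ i : ℕ, bettiNumber K (monIdeal K m₁) i = bettiNumber K (monIdeal K m₂) i) ∧
    pdim K (monIdeal K m₁) = pdim K (monIdeal K m₂) := by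
  obtain ⟨σ, hσ⟩ := exists_equiv m₁ m₂ h₁min h₂min e he
  have hI : monIdeal K m₂ = monIdeal K (m₂ ∘ σ) := by
    unfold monIdeal
    congr 1
    exact (σ.surjective.range_comp fun k =>
      MvPolynomial.monomial (Finsupp.equivFunOnFinite.symm (m₂ k)) (1 : K)).symm
  have hb : ∀ i, bettiNumber K (monIdeal K m₁) i = bettiNumber K (monIdeal K m₂) i := by
    intro i
    rw [hI]
    exact bettiNumber_congr K m₁ (m₂ ∘ σ) hσ i
  refine ⟨hb, ?_⟩
  unfold pdim
  simp only [hb]
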